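/- Assume the local setting. Let G(x) be a μ×μ matrix with entries in K_v(x), define G_n and χ_v as usual, and set h(n) = max_{0≤s≤n} log|G_s(x)/[s]_q!|_{v,Gauss}. Then the sequence (h(n)/n)_{n≥1} converges, and its limit equals log(1/χ_v). -/

import Mathlib

open Filter
open scoped ENNReal

noncomputable section

variable {Kv : Type*} [NormedField Kv]

/-- `[n]_q = 1 + q + ⋯ + q^{n-1}`. -/
def qNat (q : Kv) (n : ℕ) : Kv := ∑ i ∈ Finset.range n, q ^ i

/-- `[n]_q! = [1]_q ⋯ [n]_q`. -/
def qFactorial (q : Kv) : ℕ → Kv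
  | 0 => 1
  | n + 1 => qFactorial q n * qNat q (n + 1)

/-- The Gaussian binomial coefficient `binom(n,i)_q`. -/
def qBinom (q : Kv) (n i : ℕ) : Kv := qFactorial q n / (qFactorial q i * qFactorial q (n - i))

/-- The substitution `x ↦ qx` on rational functions. -/
def ratSubst (q : Kv) (f : RatFunc Kv) : RatFunc Kv :=
  algebraMap (Polynomial Kv) (RatFunc Kv) (f.num.comp (Polynomial.C q * Polynomial.X)) /
    algebraMap (Polynomial Kv) (RatFunc Kv) (f.denom.comp (Polynomial.C q * Polynomial.X))

/-- The `q`-difference operator `d_q f(x) = (f(qx) - f(x))/((q-1)x)`. -/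
def qDeriv (q : Kv) (f : RatFunc Kv) : RatFunc Kv :=
  (ratSubst q f - f) / (RatFunc.C (q - 1) * RatFunc.X)

/-- The Gauss norm of a polynomial: the sup of the norms of its coefficients. -/
def polyGaussNorm (P : Polynomial Kv) : ℝ := ⨆ i : ℕ, ‖P.coeff i‖

/-- The Gauss norm of a rational function. -/
def gaussNorm (f : RatFunc Kv) : ℝ := polyGaussNorm f.num / polyGaussNorm f.denom

/-- The Gauss norm of a matrix of rational functions: max of the Gauss norms of the entries. -/
def matGaussNorm {μ : ℕ} (M : Matrix (Fin μ) (Fin μ) (RatFunc Kv)) : ℝ :=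
  ⨆ i, ⨆ j, gaussNorm (M i j)

/-- The sequence of matrices `G_n`: `G_0 = 1`, `G_{n+1}(x) = G(x)·G_n(qx) + (d_q G_n)(x)`. -/
def Gseq {μ : ℕ} (q : Kv) (G : Matrix (Fin μ) (Fin μ) (RatFunc Kv)) :
    ℕ → Matrix (Fin μ) (Fin μ) (RatFunc Kv)
  | 0 => 1
  | n + 1 => G * (Gseq q G n).map (ratSubst q) + (Gseq q G n).map (qDeriv q)

/-- `χ_v = min(1, liminf |G_n/[n]_q!|^{-1/n})`, computed in `ℝ≥0∞`. -/
def chiV {μ : ℕ} (q : Kv) (G : Matrix (Fin μ) (Fin μ) (RatFunc Kv)) : ℝ≥0∞ :=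
  min 1 (Filter.liminf (fun n : ℕ =>
    (ENNReal.ofReal (matGaussNorm (Gseq q G n) / ‖qFactorial q n‖)) ^ (-(1 / (n : ℝ))))
    Filter.atTop)

/-!
Let `D Y = G(x) Y(qx) + (d_q Y)(x)`, so that `G_n = D ^ n 1`. The twisted Leibniz rule for the
divided powers `D ^ n / [n]_q!`,
`D^n/[n]! (Y Z) = ∑_{i + j = n} (D^i/[i]! Y) · σ^i (d_q^j/[j]! Z)` with `σ f(x) = f(qx)`,
contains no binomial coefficients, and both `σ` and `d_q^j/[j]!` are contractions for the Gauss
norm: for the latter this is a direct computation on `1` and `x`, and the Leibniz rule propagates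
it to monomials and to quotients of polynomials. Taking `Y = 1` and `Z = G_m` gives
`|G_{n+m}| ≤ |[n]!| · max_{i ≤ n} |G_i/[i]!| · |G_m|`.

Iterating this with `n` fixed, `|G_N|` grows at most like `(|[n]!| e^{h(n)})^{N/n}`. The sequence
`|[n]!|` is submultiplicative and bounded below by an exponential, so by Fekete's lemma
`log |[n]!| / n` converges to some `l` and `|[N]!| ≥ e^{lN}`. Hence
`log(1/χ) ≤ h(n)/n + (log |[n]!| / n - l)`, where the error term tends to `0`; conversely
`limsup h(n)/n ≤ log(1/χ)` holds for the running maximum of any sequence.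
-/

section QAnalogues

variable {q : Kv}

@[simp] theorem qNat_zero (q : Kv) : qNat q 0 = 0 := by simp [qNat]

theorem qNat_add (q : Kv) (m n : ℕ) : qNat q (m + n) = qNat q m + q ^ m * qNat q n := by
  simp only [qNat, Finset.sum_range_add, Finset.mul_sum, pow_add]

theorem sub_one_mul_qNat (q : Kv) (n : ℕ) : (q - 1) * qNat q n = q ^ n - 1 :=
  mul_geom_sum q n

theorem qNat_ne_zero (hq : ∀ m : ℕ, 0 < m → q ^ m ≠ 1) {n : ℕ} (hn : 0 < n) : qNat q n ≠ 0 :=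
  right_ne_zero_of_mul (sub_one_mul_qNat q n ▸ sub_ne_zero.2 (hq n hn))

@[simp] theorem qFactorial_zero (q : Kv) : qFactorial q 0 = 1 := rfl

theorem qFactorial_succ (q : Kv) (n : ℕ) :
    qFactorial q (n + 1) = qFactorial q n * qNat q (n + 1) := rfl

theorem qFactorial_ne_zero (hq : ∀ m : ℕ, 0 < m → q ^ m ≠ 1) (n : ℕ) : qFactorial q n ≠ 0 := by
  induction n with
  | zero => exact one_ne_zero
  | succ n ih => exact mul_ne_zero ih (qNat_ne_zero hq n.succ_pos)

theorem qFactorial_add_succ (q : Kv) (m n : ℕ) :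
    qFactorial q (m + 1 + (n + 1)) =
      qFactorial q (m + (n + 1)) * qNat q (m + 1) +
        q ^ (m + 1) * (qFactorial q (m + 1 + n) * qNat q (n + 1)) := by
  rw [← add_assoc (m + 1) n 1, qFactorial_succ, add_assoc (m + 1) n 1, qNat_add,
    show m + (n + 1) = m + 1 + n by omega]
  ring

-- Equivalently, Gaussian binomial coefficients are integral; the induction is Pascal's rule.
theorem norm_qFactorial_add_le [IsUltrametricDist Kv] (hq : ‖q‖ ≤ 1) (m n : ℕ) :
    ‖qFactorial q (m + n)‖ ≤ ‖qFactorial q m‖ * ‖qFactorial q n‖ := by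
  induction m generalizing n with
  | zero => simp
  | succ m ihm =>
    induction n with
    | zero => simp
    | succ n ihn =>
      rw [qFactorial_add_succ]
      refine (IsUltrametricDist.norm_add_le_max _ _).trans (max_le ?_ ?_)
      · calc ‖qFactorial q (m + (n + 1)) * qNat q (m + 1)‖
            ≤ ‖qFactorial q m‖ * ‖qFactorial q (n + 1)‖ * ‖qNat q (m + 1)‖ := by
              rw [norm_mul]; gcongr; exact ihm (n + 1)
          _ = ‖qFactorial q (m + 1)‖ * ‖qFactorial q (n + 1)‖ := by
              rw [qFactorial_succ q m, norm_mul, mul_right_comm]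
      · calc ‖q ^ (m + 1) * (qFactorial q (m + 1 + n) * qNat q (n + 1))‖
            ≤ 1 * (‖qFactorial q (m + 1)‖ * ‖qFactorial q n‖ * ‖qNat q (n + 1)‖) := by
              rw [norm_mul, norm_mul, norm_pow]
              gcongr
              exact pow_le_one₀ (norm_nonneg q) hq
          _ = ‖qFactorial q (m + 1)‖ * ‖qFactorial q (n + 1)‖ := by
              rw [qFactorial_succ q n, norm_mul, one_mul, mul_assoc]

end QAnalogues

section NormFactorial

variable [IsUltrametricDist Kv] {p : ℕ}

theorem norm_natCast_eq_one_of_coprime (hp : ‖(p : Kv)‖ < 1) {n : ℕ} (h : p.Coprime n) :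
    ‖(n : Kv)‖ = 1 := by
  refine (IsUltrametricDist.norm_natCast_le_one Kv n).antisymm ?_
  have bezout : (p * p.gcdA n + n * p.gcdB n : Kv) = 1 := by
    exact_mod_cast (congrArg (Int.cast (R := Kv)) (Nat.gcd_eq_gcd_ab p n)).symm.trans (by simp [h])
  by_contra! hn
  have hlt : ‖(p * p.gcdA n + n * p.gcdB n : Kv)‖ < 1 := by
    refine (IsUltrametricDist.norm_add_le_max _ _).trans_lt (max_lt ?_ ?_) <;> rw [norm_mul]
    · exact mul_lt_one_of_nonneg_of_lt_one_left (norm_nonneg _) hp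
        (IsUltrametricDist.norm_intCast_le_one Kv _)
    · exact mul_lt_one_of_nonneg_of_lt_one_left (norm_nonneg _) hn
        (IsUltrametricDist.norm_intCast_le_one Kv _)
  rw [bezout, norm_one] at hlt
  exact hlt.false

theorem norm_natCast_eq_pow_factorization (hp : p.Prime) (hpv : ‖(p : Kv)‖ < 1) {n : ℕ}
    (hn : n ≠ 0) : ‖(n : Kv)‖ = ‖(p : Kv)‖ ^ n.factorization p := by
  conv_lhs => rw [← Nat.ordProj_mul_ordCompl_eq_self n p]
  rw [Nat.cast_mul, norm_mul, norm_natCast_eq_one_of_coprime hpv (Nat.coprime_ordCompl hp hn),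
    mul_one, Nat.cast_pow, norm_pow]

theorem charZero_of_norm_natCast_lt_one (hp : p.Prime) (hpv : ‖(p : Kv)‖ < 1)
    (hp0 : (p : Kv) ≠ 0) : CharZero Kv := by
  refine charZero_of_inj_zero fun n hn => by_contra fun hn0 => ?_
  have := norm_natCast_eq_pow_factorization hp hpv hn0
  rw [hn, norm_zero] at this
  exact pow_ne_zero _ (norm_ne_zero_iff.2 hp0) this.symm

variable (Kv) in
theorem exists_prime_norm_natCast_eq_pow_factorization :
    ∃ p : ℕ, p.Prime ∧ ∀ n : ℕ, n ≠ 0 → ‖(n : Kv)‖ = ‖(p : Kv)‖ ^ n.factorization p := by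
  by_cases hp : ∃ p : ℕ, p.Prime ∧ ‖(p : Kv)‖ < 1
  · obtain ⟨p, hp, hpv⟩ := hp
    exact ⟨p, hp, fun n hn => norm_natCast_eq_pow_factorization hp hpv hn⟩
  · push Not at hp
    have norm_prime (p : ℕ) (h : p.Prime) : ‖(p : Kv)‖ = 1 :=
      (IsUltrametricDist.norm_natCast_le_one Kv p).antisymm (hp p h)
    refine ⟨2, Nat.prime_two, fun n hn => ?_⟩
    rw [norm_prime 2 Nat.prime_two, one_pow]
    induction n using induction_on_primes with
    | zero => exact absurd rfl hn
    | one => simp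
    | prime_mul p a hpp ih =>
      rw [Nat.cast_mul, norm_mul, norm_prime p hpp, one_mul, ih (right_ne_zero_of_mul hn)]

variable (Kv) in
theorem exists_pow_le_norm_natCast_succ_and_norm_factorial [CharZero Kv] :
    ∃ r : ℝ, 0 < r ∧
      ∀ n : ℕ, r ^ n ≤ ‖((n + 1 : ℕ) : Kv)‖ ∧ r ^ n ≤ ‖(n.factorial : Kv)‖ := by
  obtain ⟨p, hp, h⟩ := exists_prime_norm_natCast_eq_pow_factorization Kv
  have hp1 : ‖(p : Kv)‖ ≤ 1 := IsUltrametricDist.norm_natCast_le_one Kv p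
  refine ⟨‖(p : Kv)‖, norm_pos_iff.2 (Nat.cast_ne_zero.2 hp.ne_zero), fun n => ⟨?_, ?_⟩⟩
  · rw [h _ n.succ_ne_zero]
    exact pow_le_pow_of_le_one (norm_nonneg _) hp1
      (Nat.lt_succ_iff.1 (Nat.factorization_lt p n.succ_ne_zero))
  · rw [h _ n.factorial_ne_zero]
    exact pow_le_pow_of_le_one (norm_nonneg _) hp1
      ((Nat.factorization_factorial_le_div_pred hp n).trans (Nat.div_le_self n (p - 1)))

end NormFactorial

section QPow

variable [IsUltrametricDist Kv]

theorem norm_choose_mul_pow_le {r : ℝ} (hr : ∀ n : ℕ, r ^ n ≤ ‖((n + 1 : ℕ) : Kv)‖) {t : Kv}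
    (ht : ‖t‖ < r) (m k : ℕ) :
    ‖t ^ (k + 1) * ((m + 1).choose (k + 1) : Kv)‖ ≤
      ‖((m + 1 : ℕ) : Kv)‖ * ‖t‖ * (‖t‖ / r) ^ k := by
  have hr0 : 0 < r := (norm_nonneg t).trans_lt ht
  have habs : ((m + 1 : ℕ) : Kv) * (m.choose k : Kv) =
      ((m + 1).choose (k + 1) : Kv) * ((k + 1 : ℕ) : Kv) := by
    rw [← Nat.cast_mul, Nat.add_one_mul_choose_eq, Nat.cast_mul]
  have hchoose : ‖((m + 1).choose (k + 1) : Kv)‖ * r ^ k ≤ ‖((m + 1 : ℕ) : Kv)‖ :=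
    calc ‖((m + 1).choose (k + 1) : Kv)‖ * r ^ k
        ≤ ‖((m + 1).choose (k + 1) : Kv)‖ * ‖((k + 1 : ℕ) : Kv)‖ := by gcongr; exact hr k
      _ = ‖((m + 1 : ℕ) : Kv)‖ * ‖(m.choose k : Kv)‖ := by rw [← norm_mul, ← habs, norm_mul]
      _ ≤ ‖((m + 1 : ℕ) : Kv)‖ :=
        mul_le_of_le_one_right (norm_nonneg _) (IsUltrametricDist.norm_natCast_le_one Kv _)
  rw [norm_mul, norm_pow, div_pow, mul_div_assoc', le_div_iff₀ (pow_pos hr0 k)]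
  calc ‖t‖ ^ (k + 1) * ‖((m + 1).choose (k + 1) : Kv)‖ * r ^ k
      = ‖t‖ ^ (k + 1) * (‖((m + 1).choose (k + 1) : Kv)‖ * r ^ k) := mul_assoc _ _ _
    _ ≤ ‖t‖ ^ (k + 1) * ‖((m + 1 : ℕ) : Kv)‖ := by gcongr
    _ = ‖((m + 1 : ℕ) : Kv)‖ * ‖t‖ * ‖t‖ ^ k := by ring

-- On the disc `‖t‖ < r` the linear term dominates the binomial expansion of `(1 + t) ^ m - 1`.
theorem norm_one_add_pow_sub_one {r : ℝ} (hr : ∀ n : ℕ, r ^ n ≤ ‖((n + 1 : ℕ) : Kv)‖) {t : Kv}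
    (ht : ‖t‖ < r) (m : ℕ) : ‖(1 + t) ^ m - 1‖ = ‖(m : Kv)‖ * ‖t‖ := by
  rcases m with _ | m
  · simp
  rcases eq_or_ne t 0 with rfl | ht0
  · simp
  have hr0 : 0 < r := (norm_nonneg t).trans_lt ht
  have hlin : 0 < ‖((m + 1 : ℕ) : Kv)‖ * ‖t‖ :=
    mul_pos ((pow_pos hr0 m).trans_le (hr m)) (norm_pos_iff.2 ht0)
  have expansion : (1 + t) ^ (m + 1) - 1 = ((m + 1 : ℕ) : Kv) * t +
      ∑ k ∈ Finset.range m, t ^ (k + 1 + 1) * ((m + 1).choose (k + 1 + 1) : Kv) := by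
    rw [add_comm 1 t, add_pow, Finset.sum_range_succ', Finset.sum_range_succ']
    simp
    ring
  have tail_lt : ‖∑ k ∈ Finset.range m, t ^ (k + 1 + 1) * ((m + 1).choose (k + 1 + 1) : Kv)‖ <
      ‖((m + 1 : ℕ) : Kv) * t‖ := by
    rw [norm_mul]
    refine (IsUltrametricDist.norm_sum_le_of_forall_le_of_nonneg
      (C := ‖((m + 1 : ℕ) : Kv)‖ * ‖t‖ * (‖t‖ / r)) (by positivity) fun k _ => ?_).trans_lt
      (mul_lt_of_lt_one_right hlin ((div_lt_one hr0).2 ht))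
    refine (norm_choose_mul_pow_le hr ht m (k + 1)).trans ?_
    gcongr
    exact pow_le_of_le_one (by positivity) ((div_le_one hr0).2 ht.le) k.succ_ne_zero
  rw [expansion, IsUltrametricDist.norm_add_eq_max_of_norm_ne_norm tail_lt.ne',
    max_eq_left tail_lt.le, norm_mul]

theorem norm_pow_mod_sub_one_lt {q : Kv} (hq : ‖q‖ ≤ 1) {r : ℝ} {n N : ℕ}
    (hN : ‖q ^ N - 1‖ < r) (hn : ‖q ^ n - 1‖ < r) : ‖q ^ (n % N) - 1‖ < r := by
  have split : q ^ (n % N) - 1 =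
      (q ^ n - 1) + q ^ (n % N) * (∑ i ∈ Finset.range (n / N), (q ^ N) ^ i) * (1 - q ^ N) := by
    rw [mul_assoc, geom_sum_mul_neg, mul_sub, ← pow_mul, ← pow_add, Nat.mod_add_div]
    ring
  have hsum : ‖∑ i ∈ Finset.range (n / N), (q ^ N) ^ i‖ ≤ 1 := by
    refine IsUltrametricDist.norm_sum_le_of_forall_le_of_nonneg zero_le_one fun i _ => ?_
    rw [← pow_mul, norm_pow]
    exact pow_le_one₀ (norm_nonneg q) hq
  rw [split]
  refine (IsUltrametricDist.norm_add_le_max _ _).trans_lt (max_lt hn ?_)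
  rw [norm_mul, norm_mul, norm_pow, norm_sub_rev]
  refine (mul_le_of_le_one_left (norm_nonneg _) ?_).trans_lt hN
  exact mul_le_one₀ (pow_le_one₀ (norm_nonneg q) hq) (norm_nonneg _) hsum

theorem exists_pos_mul_norm_natCast_le_norm_pow_sub_one [CharZero Kv] {q : Kv} (hq1 : ‖q‖ ≤ 1)
    (hq : ∀ m : ℕ, 0 < m → q ^ m ≠ 1) :
    ∃ δ : ℝ, 0 < δ ∧ ∀ n : ℕ, δ * ‖(n : Kv)‖ ≤ ‖q ^ n - 1‖ := by
  classical
  obtain ⟨r, hr0, hr⟩ := exists_pow_le_norm_natCast_succ_and_norm_factorial Kv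
  have hr (n : ℕ) := (hr n).1
  by_cases hclose : ∃ N : ℕ, 0 < N ∧ ‖q ^ N - 1‖ < r
  · let N := Nat.find hclose
    obtain ⟨hN0, hNr⟩ : 0 < N ∧ ‖q ^ N - 1‖ < r := Nat.find_spec hclose
    have norm_pow_mul (m : ℕ) : ‖q ^ (N * m) - 1‖ = ‖(m : Kv)‖ * ‖q ^ N - 1‖ := by
      rw [pow_mul, ← norm_one_add_pow_sub_one hr hNr m, add_sub_cancel]
    refine ⟨‖q ^ N - 1‖, norm_pos_iff.2 (sub_ne_zero.2 (hq N hN0)), fun n => ?_⟩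
    by_cases hdvd : N ∣ n
    · obtain ⟨m, rfl⟩ := hdvd
      rw [norm_pow_mul, mul_comm, Nat.cast_mul, norm_mul]
      gcongr
      exact mul_le_of_le_one_left (norm_nonneg _) (IsUltrametricDist.norm_natCast_le_one Kv N)
    · refine (mul_le_of_le_one_right (norm_nonneg _)
        (IsUltrametricDist.norm_natCast_le_one Kv n)).trans (hNr.le.trans ?_)
      by_contra! hnr
      exact Nat.find_min hclose (Nat.mod_lt n hN0)
        ⟨Nat.pos_of_ne_zero (mt Nat.dvd_of_mod_eq_zero hdvd), norm_pow_mod_sub_one_lt hq1 hNr hnr⟩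
  · push Not at hclose
    refine ⟨r, hr0, fun n => ?_⟩
    rcases n.eq_zero_or_pos with rfl | hn
    · simp
    · exact (mul_le_of_le_one_right hr0.le
        (IsUltrametricDist.norm_natCast_le_one Kv n)).trans (hclose n hn)

theorem exists_pow_le_norm_qFactorial [CharZero Kv] {q : Kv} (hq1 : ‖q‖ ≤ 1)
    (hq : ∀ m : ℕ, 0 < m → q ^ m ≠ 1) : ∃ c : ℝ, 0 < c ∧ ∀ n, c ^ n ≤ ‖qFactorial q n‖ := by
  obtain ⟨δ, hδ0, hδ⟩ := exists_pos_mul_norm_natCast_le_norm_pow_sub_one hq1 hq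
  obtain ⟨r, hr0, hr⟩ := exists_pow_le_norm_natCast_succ_and_norm_factorial Kv
  have hqsub : ‖q - 1‖ ≤ 1 := by
    rw [sub_eq_add_neg]
    exact (IsUltrametricDist.norm_add_le_max q _).trans (max_le hq1 (by simp))
  have hnat (n : ℕ) : δ * ‖(n : Kv)‖ ≤ ‖qNat q n‖ :=
    calc δ * ‖(n : Kv)‖ ≤ ‖q - 1‖ * ‖qNat q n‖ := by
          rw [← norm_mul, sub_one_mul_qNat]; exact hδ n
      _ ≤ ‖qNat q n‖ := mul_le_of_le_one_left (norm_nonneg _) hqsub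
  have hfac (n : ℕ) : δ ^ n * ‖(n.factorial : Kv)‖ ≤ ‖qFactorial q n‖ := by
    induction n with
    | zero => simp
    | succ n ih =>
      calc δ ^ (n + 1) * ‖((n + 1).factorial : Kv)‖
          = δ ^ n * ‖(n.factorial : Kv)‖ * (δ * ‖((n + 1 : ℕ) : Kv)‖) := by
            rw [Nat.factorial_succ, Nat.cast_mul, norm_mul]; ring
        _ ≤ ‖qFactorial q n‖ * ‖qNat q (n + 1)‖ := by gcongr; exact hnat (n + 1)
        _ = ‖qFactorial q (n + 1)‖ := by rw [qFactorial_succ, norm_mul]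
  refine ⟨δ * r, mul_pos hδ0 hr0, fun n => ?_⟩
  rw [mul_pow]
  exact (mul_le_mul_of_nonneg_left (hr n).2 (by positivity)).trans (hfac n)

end QPow

section GaussNorm

open scoped Polynomial

theorem norm_coeff_le_gaussNorm (P : Kv[X]) (i : ℕ) :
    ‖P.coeff i‖ ≤ P.gaussNorm (NormedField.toAbsoluteValue Kv) 1 := by
  simpa using! P.le_gaussNorm (NormedField.toAbsoluteValue Kv) zero_le_one i

theorem polyGaussNorm_eq_gaussNorm (P : Kv[X]) :
    polyGaussNorm P = P.gaussNorm (NormedField.toAbsoluteValue Kv) 1 := by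
  obtain ⟨i, hi⟩ := P.exists_eq_gaussNorm (NormedField.toAbsoluteValue Kv) 1
  refine le_antisymm (ciSup_le (norm_coeff_le_gaussNorm P)) (hi.trans_le ?_)
  simpa using! le_ciSup (f := fun i => ‖P.coeff i‖)
    ⟨_, Set.forall_mem_range.2 (norm_coeff_le_gaussNorm P)⟩ i

theorem norm_coeff_le_polyGaussNorm (P : Kv[X]) (i : ℕ) : ‖P.coeff i‖ ≤ polyGaussNorm P :=
  polyGaussNorm_eq_gaussNorm P ▸ norm_coeff_le_gaussNorm P i

theorem polyGaussNorm_nonneg (P : Kv[X]) : 0 ≤ polyGaussNorm P :=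
  Real.iSup_nonneg fun _ => norm_nonneg _

@[simp] theorem polyGaussNorm_eq_zero {P : Kv[X]} : polyGaussNorm P = 0 ↔ P = 0 := by
  rw [polyGaussNorm_eq_gaussNorm]
  exact P.gaussNorm_eq_zero_iff _ (fun _ h => norm_eq_zero.1 h) one_pos

theorem polyGaussNorm_pos {P : Kv[X]} (hP : P ≠ 0) : 0 < polyGaussNorm P :=
  (polyGaussNorm_nonneg P).lt_of_ne' (polyGaussNorm_eq_zero.not.2 hP)

theorem polyGaussNorm_C (c : Kv) : polyGaussNorm (Polynomial.C c) = ‖c‖ := by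
  rw [polyGaussNorm_eq_gaussNorm, Polynomial.gaussNorm_C]
  rfl

theorem polyGaussNorm_X : polyGaussNorm (Polynomial.X : Kv[X]) = 1 := by
  rw [polyGaussNorm_eq_gaussNorm, ← Polynomial.monomial_one_one_eq_X,
    Polynomial.gaussNorm_monomial, map_one, one_pow, mul_one]

theorem polyGaussNorm_comp_C_mul_X {q : Kv} (hq : ‖q‖ = 1) (P : Kv[X]) :
    polyGaussNorm (P.comp (Polynomial.C q * Polynomial.X)) = polyGaussNorm P := by
  simp [polyGaussNorm, Polynomial.comp_C_mul_X_coeff, hq]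

theorem gaussNorm_nonneg (f : RatFunc Kv) : 0 ≤ gaussNorm f :=
  div_nonneg (polyGaussNorm_nonneg _) (polyGaussNorm_nonneg _)

theorem gaussNorm_eq_zero {f : RatFunc Kv} : gaussNorm f = 0 ↔ f = 0 := by
  simp [gaussNorm, f.denom_ne_zero]

variable [IsUltrametricDist Kv]

theorem polyGaussNorm_mul (P Q : Kv[X]) :
    polyGaussNorm (P * Q) = polyGaussNorm P * polyGaussNorm Q := by
  simp only [polyGaussNorm_eq_gaussNorm]
  exact Polynomial.gaussNorm_mul IsUltrametricDist.isNonarchimedean_norm one_pos P Q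

theorem polyGaussNorm_add_le_max (P Q : Kv[X]) :
    polyGaussNorm (P + Q) ≤ max (polyGaussNorm P) (polyGaussNorm Q) := by
  simp only [polyGaussNorm_eq_gaussNorm]
  exact Polynomial.isNonarchimedean_gaussNorm _ IsUltrametricDist.isNonarchimedean_norm
    zero_le_one P Q

theorem gaussNorm_div (P : Kv[X]) {Q : Kv[X]} (hQ : Q ≠ 0) :
    gaussNorm (algebraMap Kv[X] (RatFunc Kv) P / algebraMap Kv[X] (RatFunc Kv) Q) =
      polyGaussNorm P / polyGaussNorm Q := by
  rw [gaussNorm, div_eq_div_iff (polyGaussNorm_pos (RatFunc.denom_ne_zero _)).ne'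
    (polyGaussNorm_pos hQ).ne', ← polyGaussNorm_mul, ← polyGaussNorm_mul,
    (RatFunc.num_mul_eq_mul_denom_iff hQ).2 rfl]

theorem gaussNorm_mul (f g : RatFunc Kv) : gaussNorm (f * g) = gaussNorm f * gaussNorm g := by
  conv_lhs => rw [← f.num_div_denom, ← g.num_div_denom]
  rw [div_mul_div_comm, ← map_mul, ← map_mul,
    gaussNorm_div _ (mul_ne_zero f.denom_ne_zero g.denom_ne_zero),
    polyGaussNorm_mul, polyGaussNorm_mul, ← div_mul_div_comm]
  rfl

theorem gaussNorm_add_le_max (f g : RatFunc Kv) :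
    gaussNorm (f + g) ≤ max (gaussNorm f) (gaussNorm g) := by
  have hf := polyGaussNorm_pos f.denom_ne_zero
  have hg := polyGaussNorm_pos g.denom_ne_zero
  calc gaussNorm (f + g)
      = polyGaussNorm (f.num * g.denom + f.denom * g.num) /
          (polyGaussNorm f.denom * polyGaussNorm g.denom) := by
        conv_lhs => rw [← f.num_div_denom, ← g.num_div_denom]
        rw [div_add_div _ _ (RatFunc.algebraMap_ne_zero f.denom_ne_zero)
          (RatFunc.algebraMap_ne_zero g.denom_ne_zero), ← map_mul, ← map_mul, ← map_mul, ← map_add,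
          gaussNorm_div _ (mul_ne_zero f.denom_ne_zero g.denom_ne_zero), polyGaussNorm_mul]
    _ ≤ max (polyGaussNorm (f.num * g.denom)) (polyGaussNorm (f.denom * g.num)) /
          (polyGaussNorm f.denom * polyGaussNorm g.denom) := by
        gcongr
        exact polyGaussNorm_add_le_max _ _
    _ = max (gaussNorm f) (gaussNorm g) := by
        rw [polyGaussNorm_mul, polyGaussNorm_mul, ← max_div_div_right (mul_pos hf hg).le,
          mul_div_mul_right _ _ hg.ne', mul_div_mul_left _ _ hf.ne']
        rfl

variable (Kv) in
/-- The Gauss norm on `Kv(x)`, bundled as an absolute value. -/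
def gaussAbsoluteValue : AbsoluteValue (RatFunc Kv) ℝ where
  toFun := gaussNorm
  map_mul' := gaussNorm_mul
  nonneg' := gaussNorm_nonneg
  eq_zero' _ := gaussNorm_eq_zero
  add_le' f g := (gaussNorm_add_le_max f g).trans
    (max_le_add_of_nonneg (gaussNorm_nonneg f) (gaussNorm_nonneg g))

theorem isNonarchimedean_gaussAbsoluteValue : IsNonarchimedean (gaussAbsoluteValue Kv) :=
  gaussNorm_add_le_max

theorem gaussNorm_zero : gaussNorm (0 : RatFunc Kv) = 0 :=
  map_zero (gaussAbsoluteValue Kv)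

theorem gaussNorm_one : gaussNorm (1 : RatFunc Kv) = 1 :=
  map_one (gaussAbsoluteValue Kv)

theorem gaussNorm_algebraMap (P : Kv[X]) :
    gaussNorm (algebraMap Kv[X] (RatFunc Kv) P) = polyGaussNorm P := by
  have h := gaussNorm_div P one_ne_zero
  rwa [map_one, div_one, ← Polynomial.C_1, polyGaussNorm_C, norm_one, div_one] at h

theorem gaussNorm_X : gaussNorm (RatFunc.X : RatFunc Kv) = 1 := by
  rw [← RatFunc.algebraMap_X, gaussNorm_algebraMap, polyGaussNorm_X]

theorem gaussNorm_X_pow (k : ℕ) : gaussNorm (RatFunc.X ^ k : RatFunc Kv) = 1 := by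
  rw [← one_pow k, ← gaussNorm_X (Kv := Kv)]
  exact map_pow (gaussAbsoluteValue Kv) RatFunc.X k

theorem gaussNorm_smul (c : Kv) (f : RatFunc Kv) : gaussNorm (c • f) = ‖c‖ * gaussNorm f := by
  rw [RatFunc.smul_eq_C_mul, gaussNorm_mul, ← RatFunc.algebraMap_C, gaussNorm_algebraMap,
    polyGaussNorm_C]

theorem gaussNorm_ratSubst {q : Kv} (hq : ‖q‖ = 1) (f : RatFunc Kv) :
    gaussNorm (ratSubst q f) = gaussNorm f := by
  have hdenom : f.denom.comp (Polynomial.C q * Polynomial.X) ≠ 0 := by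
    rw [Ne, ← polyGaussNorm_eq_zero, polyGaussNorm_comp_C_mul_X hq]
    exact (polyGaussNorm_pos f.denom_ne_zero).ne'
  rw [ratSubst, gaussNorm_div _ hdenom, polyGaussNorm_comp_C_mul_X hq,
    polyGaussNorm_comp_C_mul_X hq, gaussNorm]

end GaussNorm

theorem apply_sum_le_of_isNonarchimedean {R ι : Type*} [Semiring R] {v : AbsoluteValue R ℝ}
    (hv : IsNonarchimedean v) {s : Finset ι} {f : ι → R} {B : ℝ} (hB : 0 ≤ B)
    (h : ∀ i ∈ s, v (f i) ≤ B) : v (∑ i ∈ s, f i) ≤ B := by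
  rcases s.eq_empty_or_nonempty with rfl | hs
  · simpa using hB
  · obtain ⟨i, hi, hle⟩ := hv.finset_image_add_of_nonempty f hs
    exact hle.trans (h i hi)

section QDifference

open scoped Polynomial

variable {q : Kv}

theorem aeval_C_mul_X_injective (hq : q ≠ 0) :
    Function.Injective (Polynomial.aeval (R := Kv) (Polynomial.C q * Polynomial.X : Kv[X])) := by
  refine (injective_iff_map_eq_zero _).2 fun P hP => Polynomial.ext fun i => ?_
  have hcomp : P.comp (Polynomial.C q * Polynomial.X) = 0 := hP
  simpa [Polynomial.comp_C_mul_X_coeff, hq] using congrArg (Polynomial.coeff · i) hcomp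

/-- The substitution `x ↦ qx` as an endomorphism of `Kv(x)`. -/
def qShift (hq : q ≠ 0) : RatFunc Kv →ₐ[Kv] RatFunc Kv :=
  RatFunc.mapAlgHom (Polynomial.aeval (Polynomial.C q * Polynomial.X : Kv[X]))
    (nonZeroDivisors_le_comap_nonZeroDivisors_of_injective _ (aeval_C_mul_X_injective hq))

theorem qShift_apply (hq : q ≠ 0) (f : RatFunc Kv) : qShift hq f = ratSubst q f := by
  rw [qShift, RatFunc.coe_mapAlgHom_eq_coe_map, RatFunc.map_apply]
  rfl

theorem qShift_C (hq : q ≠ 0) (c : Kv) : qShift hq (RatFunc.C c) = RatFunc.C c := by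
  rw [← RatFunc.algebraMap_eq_C, AlgHom.commutes]

theorem qShift_X (hq : q ≠ 0) : qShift hq RatFunc.X = RatFunc.C q * RatFunc.X := by
  rw [qShift_apply, ratSubst, RatFunc.num_X, RatFunc.denom_X]
  simp

theorem gaussNorm_qShift [IsUltrametricDist Kv] (hq0 : q ≠ 0) (hq : ‖q‖ = 1) (f : RatFunc Kv) :
    gaussNorm (qShift hq0 f) = gaussNorm f := by
  rw [qShift_apply, gaussNorm_ratSubst hq]

theorem qDeriv_eq (hq : q ≠ 0) (f : RatFunc Kv) :
    qDeriv q f = (qShift hq f - f) / (RatFunc.C (q - 1) * RatFunc.X) := by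
  rw [qShift_apply, qDeriv]

/-- The operator `d_q` as a `Kv`-linear endomorphism of `Kv(x)`. -/
def qDerivLinear (hq : q ≠ 0) : Module.End Kv (RatFunc Kv) where
  toFun := qDeriv q
  map_add' f g := by
    simp only [qDeriv_eq hq, map_add]
    ring
  map_smul' c f := by
    rw [qDeriv_eq hq, qDeriv_eq hq, map_smul, ← smul_sub, RatFunc.smul_eq_C_mul, mul_div_assoc,
      ← RatFunc.smul_eq_C_mul, RingHom.id_apply]

theorem qDerivLinear_apply (hq : q ≠ 0) (f : RatFunc Kv) : qDerivLinear hq f = qDeriv q f := rfl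

theorem qDerivLinear_mul_qShift (hq : q ≠ 0) :
    qDerivLinear hq * (qShift hq).toLinearMap =
      q • ((qShift hq).toLinearMap * qDerivLinear hq) := by
  ext f
  have hCq : RatFunc.C q ≠ 0 := by simpa using hq
  simp only [Module.End.mul_apply, LinearMap.smul_apply, AlgHom.toLinearMap_apply,
    qDerivLinear_apply, qDeriv_eq hq, map_div₀, map_sub (qShift hq), map_mul, qShift_C, qShift_X,
    RatFunc.smul_eq_C_mul]
  rw [mul_div_assoc', mul_left_comm (RatFunc.C (q - 1)), mul_div_mul_left _ _ hCq]

theorem qDeriv_mul (hq : q ≠ 0) (f g : RatFunc Kv) :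
    qDeriv q (f * g) = qDeriv q f * qShift hq g + f * qDeriv q g := by
  simp only [qDeriv_eq hq, map_mul]
  ring

theorem qDeriv_one (hq : q ≠ 0) : qDeriv q (1 : RatFunc Kv) = 0 := by
  rw [qDeriv_eq hq, map_one, sub_self, zero_div]

theorem qDeriv_X (hq : q ≠ 0) (hq1 : q ≠ 1) : qDeriv q (RatFunc.X : RatFunc Kv) = 1 := by
  have hC : RatFunc.C (q - 1) ≠ 0 := (map_ne_zero _).2 (sub_ne_zero.2 hq1)
  rw [qDeriv_eq hq, qShift_X, ← sub_one_mul, ← RatFunc.C.map_one, ← map_sub, map_one]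
  exact div_self (mul_ne_zero hC RatFunc.X_ne_zero)

end QDifference

section DividedPowers

variable {q : Kv}

/-- The `q`-divided power `D ^ n / [n]_q!` of an endomorphism. -/
def qDividedPower {M : Type*} [AddCommGroup M] [Module Kv M] (q : Kv) (D : Module.End Kv M)
    (n : ℕ) : Module.End Kv M :=
  (qFactorial q n)⁻¹ • D ^ n

section Module

variable {M : Type*} [AddCommGroup M] [Module Kv M]

theorem qDividedPower_zero (q : Kv) (D : Module.End Kv M) : qDividedPower q D 0 = 1 := by
  simp [qDividedPower]

theorem qDividedPower_one (q : Kv) (D : Module.End Kv M) : qDividedPower q D 1 = D := by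
  simp [qDividedPower, qFactorial, qNat]

theorem apply_qDividedPower (hq : ∀ m : ℕ, 0 < m → q ^ m ≠ 1) (D : Module.End Kv M) (n : ℕ)
    (Y : M) : D (qDividedPower q D n Y) = qNat q (n + 1) • qDividedPower q D (n + 1) Y := by
  have hcancel : qNat q (n + 1) * (qFactorial q (n + 1))⁻¹ = (qFactorial q n)⁻¹ := by
    rw [qFactorial_succ, mul_inv, mul_left_comm, mul_inv_cancel₀ (qNat_ne_zero hq n.succ_pos),
      mul_one]
  rw [qDividedPower, qDividedPower, LinearMap.smul_apply, LinearMap.smul_apply, map_smul,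
    ← Module.End.mul_apply, ← pow_succ', smul_smul, hcancel]

theorem qDividedPower_apply_eq_zero_of_le (q : Kv) (D : Module.End Kv M) {m n : ℕ} (hmn : m ≤ n)
    {Y : M} (hY : (D ^ m) Y = 0) : qDividedPower q D n Y = 0 := by
  rw [qDividedPower, LinearMap.smul_apply, Module.End.pow_map_zero_of_le hmn hY, smul_zero]

-- Pascal's rule for Gaussian binomial coefficients, in divided-power normalization.
theorem sum_antidiagonal_qNat_smul (q : Kv) (n : ℕ) (F : ℕ → ℕ → M) :
    ∑ ij ∈ Finset.HasAntidiagonal.antidiagonal n, (qNat q (ij.1 + 1) • F (ij.1 + 1) ij.2 +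
        (q ^ ij.1 * qNat q (ij.2 + 1)) • F ij.1 (ij.2 + 1)) =
      qNat q (n + 1) • ∑ ij ∈ Finset.HasAntidiagonal.antidiagonal (n + 1), F ij.1 ij.2 := by
  have shift_fst := Finset.Nat.sum_antidiagonal_succ (n := n)
    (f := fun ij : ℕ × ℕ => qNat q ij.1 • F ij.1 ij.2)
  have shift_snd := Finset.Nat.sum_antidiagonal_succ' (n := n)
    (f := fun ij : ℕ × ℕ => (q ^ ij.1 * qNat q ij.2) • F ij.1 ij.2)
  simp only [qNat_zero, zero_smul, mul_zero, zero_add] at shift_fst shift_snd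
  rw [Finset.sum_add_distrib, ← shift_fst, ← shift_snd, ← Finset.sum_add_distrib, Finset.smul_sum]
  refine Finset.sum_congr rfl fun ij hij => ?_
  rw [← add_smul, ← qNat_add, Finset.HasAntidiagonal.mem_antidiagonal.1 hij]

theorem mul_pow_eq_smul_pow_mul {d σ : Module.End Kv M} (hdσ : d * σ = q • (σ * d)) (i : ℕ) :
    d * σ ^ i = q ^ i • (σ ^ i * d) := by
  induction i with
  | zero => simp
  | succ i ih =>
    rw [pow_succ σ, ← mul_assoc, ih, smul_mul_assoc, mul_assoc, hdσ, mul_smul_comm, smul_smul,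
      ← pow_succ, mul_assoc]

end Module

variable {R : Type*} [Ring R] [Algebra Kv R]

theorem qDividedPower_mul (hq : ∀ m : ℕ, 0 < m → q ^ m ≠ 1) {σ d D : Module.End Kv R}
    (hdσ : d * σ = q • (σ * d)) (hD : ∀ Y Z, D (Y * Z) = D Y * σ Z + Y * d Z) (n : ℕ) (Y Z : R) :
    qDividedPower q D n (Y * Z) =
      ∑ ij ∈ Finset.HasAntidiagonal.antidiagonal n,
        qDividedPower q D ij.1 Y * (σ ^ ij.1) (qDividedPower q d ij.2 Z) := by
  induction n with
  | zero => simp [qDividedPower_zero]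
  | succ n ih =>
    have d_shift (i : ℕ) (W : R) : d ((σ ^ i) W) = q ^ i • (σ ^ i) (d W) :=
      LinearMap.congr_fun (mul_pow_eq_smul_pow_mul hdσ i) W
    refine smul_right_injective R (qNat_ne_zero hq n.succ_pos) ?_
    beta_reduce
    rw [← apply_qDividedPower hq, ih, map_sum, ← sum_antidiagonal_qNat_smul q n
      fun i j => qDividedPower q D i Y * (σ ^ i) (qDividedPower q d j Z)]
    refine Finset.sum_congr rfl fun ij _ => ?_
    rw [hD, apply_qDividedPower hq, d_shift, apply_qDividedPower hq, ← Module.End.mul_apply,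
      ← pow_succ', map_smul, smul_mul_assoc, smul_smul, mul_smul_comm]

section Bounded

variable {v : AbsoluteValue R ℝ} {σ d : Module.End Kv R}

theorem map_pow_apply_of_map_apply (hσ : ∀ f, v (σ f) = v f) (i : ℕ) (f : R) :
    v ((σ ^ i) f) = v f := by
  induction i with
  | zero => simp
  | succ i ih => rw [pow_succ', Module.End.mul_apply, hσ, ih]

theorem map_qDividedPower_mul_le (hq : ∀ m : ℕ, 0 < m → q ^ m ≠ 1) (hv : IsNonarchimedean v)
    (hσ : ∀ f, v (σ f) = v f) (hdσ : d * σ = q • (σ * d))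
    (hd : ∀ f g, d (f * g) = d f * σ g + f * d g) {f g : R}
    (hf : ∀ n, v (qDividedPower q d n f) ≤ v f) (hg : ∀ n, v (qDividedPower q d n g) ≤ v g)
    (n : ℕ) : v (qDividedPower q d n (f * g)) ≤ v (f * g) := by
  rw [qDividedPower_mul hq hdσ hd]
  refine apply_sum_le_of_isNonarchimedean hv (v.nonneg _) fun ij _ => ?_
  rw [v.map_mul, v.map_mul, map_pow_apply_of_map_apply hσ]
  gcongr
  exacts [hf _, hg _]

/- In the Leibniz expansion of `f * g` the term with `ij = (n, 0)` is `D_n f * σ ^ n g`; all the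
other terms involve only `D_i f` with `i < n`. -/
theorem map_qDividedPower_le_of_mul (hq : ∀ m : ℕ, 0 < m → q ^ m ≠ 1) (hv : IsNonarchimedean v)
    (hσ : ∀ f, v (σ f) = v f) (hdσ : d * σ = q • (σ * d))
    (hd : ∀ f g, d (f * g) = d f * σ g + f * d g) {f g : R} (hg0 : g ≠ 0)
    (hg : ∀ n, v (qDividedPower q d n g) ≤ v g)
    (hfg : ∀ n, v (qDividedPower q d n (f * g)) ≤ v (f * g)) (n : ℕ) :
    v (qDividedPower q d n f) ≤ v f := by
  induction n using Nat.strong_induction_on with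
  | _ n ih =>
    have hmem : (n, 0) ∈ Finset.HasAntidiagonal.antidiagonal n := by simp
    have leibniz := qDividedPower_mul hq hdσ hd n f g
    rw [← Finset.add_sum_erase _ _ hmem, qDividedPower_zero,
      Module.End.one_apply] at leibniz
    have tail_le : v (∑ ij ∈ (Finset.HasAntidiagonal.antidiagonal n).erase (n, 0),
        qDividedPower q d ij.1 f * (σ ^ ij.1) (qDividedPower q d ij.2 g)) ≤ v f * v g := by
      refine apply_sum_le_of_isNonarchimedean hv (by positivity) fun ij hij => ?_
      have hlt : ij.1 < n := by
        obtain ⟨hne, hsum⟩ := Finset.mem_erase.1 hij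
        rw [Finset.HasAntidiagonal.mem_antidiagonal] at hsum
        exact lt_of_le_of_ne (by omega) fun h => hne (Prod.ext h (by grind))
      rw [v.map_mul, map_pow_apply_of_map_apply hσ]
      gcongr
      exacts [ih _ hlt, hg _]
    refine le_of_mul_le_mul_right ?_ (v.pos hg0)
    calc v (qDividedPower q d n f) * v g
        = v (qDividedPower q d n f * (σ ^ n) g) := by
          rw [v.map_mul, map_pow_apply_of_map_apply hσ]
      _ ≤ max (v (qDividedPower q d n (f * g))) (v f * v g) := by
          rw [eq_sub_of_add_eq leibniz.symm, sub_eq_add_neg]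
          exact (hv _ _).trans (max_le_max_left _ ((v.map_neg _).trans_le tail_le))
      _ ≤ v f * v g := max_le ((hfg n).trans_eq (v.map_mul f g)) le_rfl

end Bounded

end DividedPowers

section QDerivBounded

open scoped Polynomial

variable [IsUltrametricDist Kv] {q : Kv}

theorem gaussNorm_qDividedPower_qDeriv_one_le (hq0 : q ≠ 0) (n : ℕ) :
    gaussNorm (qDividedPower q (qDerivLinear hq0) n 1) ≤ 1 := by
  rcases n.eq_zero_or_pos with rfl | hn
  · rw [qDividedPower_zero, Module.End.one_apply, gaussNorm_one]
  · rw [qDividedPower_apply_eq_zero_of_le q _ hn (by simp [qDerivLinear_apply, qDeriv_one hq0]),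
      gaussNorm_zero]
    exact zero_le_one

theorem gaussNorm_qDividedPower_qDeriv_X_le (hq0 : q ≠ 0) (hq1 : q ≠ 1) (n : ℕ) :
    gaussNorm (qDividedPower q (qDerivLinear hq0) n RatFunc.X) ≤ 1 := by
  match n with
  | 0 => rw [qDividedPower_zero, Module.End.one_apply, gaussNorm_X]
  | 1 => rw [qDividedPower_one, qDerivLinear_apply, qDeriv_X hq0 hq1, gaussNorm_one]
  | n + 2 =>
    have hd2 : (qDerivLinear hq0 ^ 2) RatFunc.X = 0 := by
      rw [pow_two, Module.End.mul_apply, qDerivLinear_apply, qDerivLinear_apply,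
        qDeriv_X hq0 hq1, qDeriv_one hq0]
    rw [qDividedPower_apply_eq_zero_of_le q _ (Nat.le_add_left 2 n) hd2, gaussNorm_zero]
    exact zero_le_one

theorem gaussNorm_qDividedPower_qDeriv_X_pow_le (hq : ‖q‖ = 1)
    (hqru : ∀ m : ℕ, 0 < m → q ^ m ≠ 1) (hq0 : q ≠ 0) (k n : ℕ) :
    gaussNorm (qDividedPower q (qDerivLinear hq0) n (RatFunc.X ^ k)) ≤ 1 := by
  have hq1 : q ≠ 1 := by simpa using hqru 1 one_pos
  induction k generalizing n with
  | zero => exact gaussNorm_qDividedPower_qDeriv_one_le hq0 n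
  | succ k ih =>
    have h := map_qDividedPower_mul_le (v := gaussAbsoluteValue Kv) hqru
      isNonarchimedean_gaussAbsoluteValue (gaussNorm_qShift hq0 hq)
      (qDerivLinear_mul_qShift hq0) (qDeriv_mul hq0)
      (fun m => (ih m).trans_eq (gaussNorm_X_pow k).symm)
      (fun m => (gaussNorm_qDividedPower_qDeriv_X_le hq0 hq1 m).trans_eq gaussNorm_X.symm) n
    rw [← pow_succ] at h
    exact h.trans_eq (gaussNorm_X_pow (k + 1))

theorem gaussNorm_qDividedPower_qDeriv_algebraMap_le (hq : ‖q‖ = 1)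
    (hqru : ∀ m : ℕ, 0 < m → q ^ m ≠ 1) (hq0 : q ≠ 0) (P : Kv[X]) (n : ℕ) :
    gaussNorm (qDividedPower q (qDerivLinear hq0) n (algebraMap Kv[X] (RatFunc Kv) P)) ≤
      gaussNorm (algebraMap Kv[X] (RatFunc Kv) P) := by
  have expansion : algebraMap Kv[X] (RatFunc Kv) P =
      ∑ i ∈ P.support, P.coeff i • (RatFunc.X ^ i : RatFunc Kv) := by
    conv_lhs => rw [P.as_sum_support_C_mul_X_pow]
    simp [RatFunc.smul_eq_C_mul]
  rw [gaussNorm_algebraMap, expansion, map_sum]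
  refine apply_sum_le_of_isNonarchimedean (v := gaussAbsoluteValue Kv)
    isNonarchimedean_gaussAbsoluteValue (polyGaussNorm_nonneg P) fun i _ => ?_
  rw [map_smul]
  calc gaussNorm (P.coeff i • qDividedPower q (qDerivLinear hq0) n (RatFunc.X ^ i))
      ≤ ‖P.coeff i‖ * 1 := by
        rw [gaussNorm_smul]
        gcongr
        exact gaussNorm_qDividedPower_qDeriv_X_pow_le hq hqru hq0 i n
    _ ≤ polyGaussNorm P := (mul_one _).trans_le (norm_coeff_le_polyGaussNorm P i)

theorem gaussNorm_qDividedPower_qDeriv_le (hq : ‖q‖ = 1)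
    (hqru : ∀ m : ℕ, 0 < m → q ^ m ≠ 1) (hq0 : q ≠ 0) (f : RatFunc Kv) (n : ℕ) :
    gaussNorm (qDividedPower q (qDerivLinear hq0) n f) ≤ gaussNorm f := by
  have hQ := RatFunc.algebraMap_ne_zero f.denom_ne_zero
  refine map_qDividedPower_le_of_mul (v := gaussAbsoluteValue Kv) hqru
    isNonarchimedean_gaussAbsoluteValue (gaussNorm_qShift hq0 hq)
    (qDerivLinear_mul_qShift hq0) (qDeriv_mul hq0) hQ
    (gaussNorm_qDividedPower_qDeriv_algebraMap_le hq hqru hq0 f.denom) (fun m => ?_) n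
  rw [← (div_eq_iff hQ).1 f.num_div_denom]
  exact gaussNorm_qDividedPower_qDeriv_algebraMap_le hq hqru hq0 f.num m

end QDerivBounded

section MatGaussNorm

variable {μ : ℕ}

theorem gaussNorm_le_matGaussNorm (M : Matrix (Fin μ) (Fin μ) (RatFunc Kv)) (i j : Fin μ) :
    gaussNorm (M i j) ≤ matGaussNorm M :=
  calc gaussNorm (M i j) ≤ ⨆ j, gaussNorm (M i j) :=
        le_ciSup (f := fun j => gaussNorm (M i j)) (Set.finite_range _).bddAbove j
    _ ≤ matGaussNorm M :=
        le_ciSup (f := fun i => ⨆ j, gaussNorm (M i j)) (Set.finite_range _).bddAbove i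

theorem matGaussNorm_nonneg (M : Matrix (Fin μ) (Fin μ) (RatFunc Kv)) : 0 ≤ matGaussNorm M :=
  Real.iSup_nonneg fun _ => Real.iSup_nonneg fun _ => gaussNorm_nonneg _

theorem matGaussNorm_le {M : Matrix (Fin μ) (Fin μ) (RatFunc Kv)} {B : ℝ} (hB : 0 ≤ B)
    (h : ∀ i j, gaussNorm (M i j) ≤ B) : matGaussNorm M ≤ B :=
  Real.iSup_le (fun i => Real.iSup_le (h i) hB) hB

variable [IsUltrametricDist Kv]

theorem matGaussNorm_smul (c : Kv) (M : Matrix (Fin μ) (Fin μ) (RatFunc Kv)) :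
    matGaussNorm (c • M) = ‖c‖ * matGaussNorm M := by
  simp only [matGaussNorm, Matrix.smul_apply, gaussNorm_smul,
    Real.mul_iSup_of_nonneg (norm_nonneg c)]

theorem matGaussNorm_mul_le (M N : Matrix (Fin μ) (Fin μ) (RatFunc Kv)) :
    matGaussNorm (M * N) ≤ matGaussNorm M * matGaussNorm N := by
  have hB := mul_nonneg (matGaussNorm_nonneg M) (matGaussNorm_nonneg N)
  refine matGaussNorm_le hB fun i j => ?_
  rw [Matrix.mul_apply]
  refine apply_sum_le_of_isNonarchimedean (v := gaussAbsoluteValue Kv)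
    isNonarchimedean_gaussAbsoluteValue hB fun k _ => (gaussNorm_mul _ _).trans_le ?_
  exact mul_le_mul (gaussNorm_le_matGaussNorm M i k) (gaussNorm_le_matGaussNorm N k j)
    (gaussNorm_nonneg _) (matGaussNorm_nonneg M)

theorem matGaussNorm_sum_le {ι : Type*} {s : Finset ι}
    {M : ι → Matrix (Fin μ) (Fin μ) (RatFunc Kv)} {B : ℝ} (hB : 0 ≤ B)
    (h : ∀ k ∈ s, matGaussNorm (M k) ≤ B) : matGaussNorm (∑ k ∈ s, M k) ≤ B := by
  refine matGaussNorm_le hB fun i j => ?_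
  rw [Matrix.sum_apply]
  exact apply_sum_le_of_isNonarchimedean (v := gaussAbsoluteValue Kv)
    isNonarchimedean_gaussAbsoluteValue hB
    fun k hk => (gaussNorm_le_matGaussNorm (M k) i j).trans (h k hk)

theorem matGaussNorm_one [NeZero μ] :
    matGaussNorm (1 : Matrix (Fin μ) (Fin μ) (RatFunc Kv)) = 1 := by
  refine le_antisymm (matGaussNorm_le zero_le_one fun i j => ?_) ?_
  · rcases eq_or_ne i j with rfl | hij
    · rw [Matrix.one_apply_eq, gaussNorm_one]
    · rw [Matrix.one_apply_ne hij, gaussNorm_zero]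
      exact zero_le_one
  · have h := gaussNorm_le_matGaussNorm (1 : Matrix (Fin μ) (Fin μ) (RatFunc Kv)) 0 0
    rwa [Matrix.one_apply_eq, gaussNorm_one] at h

-- For `μ = 0` the norm is an empty supremum, hence `0`, and `Real.log 0 = 0`.
theorem log_matGaussNorm_one :
    Real.log (matGaussNorm (1 : Matrix (Fin μ) (Fin μ) (RatFunc Kv))) = 0 := by
  rcases eq_zero_or_neZero μ with rfl | _
  · simp [matGaussNorm]
  · rw [matGaussNorm_one, Real.log_one]

end MatGaussNorm

section Matrices

variable {μ : ℕ} {q : Kv}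

theorem mapMatrix_pow_apply {R M : Type*} [CommSemiring R] [AddCommMonoid M] [Module R M]
    (D : Module.End R M) (n : ℕ) (Y : Matrix (Fin μ) (Fin μ) M) (i j : Fin μ) :
    ((D.mapMatrix : Module.End R (Matrix (Fin μ) (Fin μ) M)) ^ n) Y i j = (D ^ n) (Y i j) := by
  induction n with
  | zero => rfl
  | succ n ih =>
    rw [pow_succ', pow_succ', Module.End.mul_apply, Module.End.mul_apply, ← ih]
    rfl

/-- The substitution `x ↦ qx` on matrices over `Kv(x)`. -/
def matQShift (μ : ℕ) (hq : q ≠ 0) : Module.End Kv (Matrix (Fin μ) (Fin μ) (RatFunc Kv)) :=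
  (qShift hq).toLinearMap.mapMatrix

/-- The operator `d_q` on matrices over `Kv(x)`. -/
def matQDeriv (μ : ℕ) (hq : q ≠ 0) : Module.End Kv (Matrix (Fin μ) (Fin μ) (RatFunc Kv)) :=
  (qDerivLinear hq).mapMatrix

/-- The operator `Y ↦ G(x) Y(qx) + (d_q Y)(x)`, whose iterates at `1` are the matrices `G_n`. -/
def twistedQDeriv (hq : q ≠ 0) (G : Matrix (Fin μ) (Fin μ) (RatFunc Kv)) :
    Module.End Kv (Matrix (Fin μ) (Fin μ) (RatFunc Kv)) :=
  LinearMap.mulLeft Kv G * matQShift μ hq + matQDeriv μ hq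

theorem twistedQDeriv_apply (hq : q ≠ 0) (G Y : Matrix (Fin μ) (Fin μ) (RatFunc Kv)) :
    twistedQDeriv hq G Y = G * matQShift μ hq Y + matQDeriv μ hq Y := rfl

theorem matQDeriv_mul_matQShift (hq : q ≠ 0) :
    matQDeriv μ hq * matQShift μ hq = q • (matQShift μ hq * matQDeriv μ hq) :=
  LinearMap.ext fun Y => Matrix.ext fun i j =>
    LinearMap.congr_fun (qDerivLinear_mul_qShift hq) (Y i j)

theorem matQShift_mul (hq : q ≠ 0) (Y Z : Matrix (Fin μ) (Fin μ) (RatFunc Kv)) :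
    matQShift μ hq (Y * Z) = matQShift μ hq Y * matQShift μ hq Z :=
  map_mul (qShift hq).mapMatrix Y Z

theorem matQDeriv_mul (hq : q ≠ 0) (Y Z : Matrix (Fin μ) (Fin μ) (RatFunc Kv)) :
    matQDeriv μ hq (Y * Z) = matQDeriv μ hq Y * matQShift μ hq Z + Y * matQDeriv μ hq Z := by
  ext i j
  change qDerivLinear hq ((Y * Z) i j) =
    (matQDeriv μ hq Y * matQShift μ hq Z) i j + (Y * matQDeriv μ hq Z) i j
  rw [Matrix.mul_apply, Matrix.mul_apply, Matrix.mul_apply, map_sum, ← Finset.sum_add_distrib]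
  exact Finset.sum_congr rfl fun k _ => qDeriv_mul hq _ _

theorem twistedQDeriv_mul (hq : q ≠ 0) (G Y Z : Matrix (Fin μ) (Fin μ) (RatFunc Kv)) :
    twistedQDeriv hq G (Y * Z) =
      twistedQDeriv hq G Y * matQShift μ hq Z + Y * matQDeriv μ hq Z := by
  rw [twistedQDeriv_apply, twistedQDeriv_apply, matQDeriv_mul, matQShift_mul, add_mul, mul_assoc,
    add_assoc]

theorem Gseq_eq_twistedQDeriv_pow (hq : q ≠ 0) (G : Matrix (Fin μ) (Fin μ) (RatFunc Kv))
    (n : ℕ) : Gseq q G n = (twistedQDeriv hq G ^ n) 1 := by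
  have matQShift_eq_map (Y : Matrix (Fin μ) (Fin μ) (RatFunc Kv)) :
      matQShift μ hq Y = Y.map (ratSubst q) :=
    Matrix.ext fun i j => qShift_apply hq (Y i j)
  induction n with
  | zero => rfl
  | succ n ih =>
    rw [pow_succ', Module.End.mul_apply, ← ih, twistedQDeriv_apply, matQShift_eq_map]
    rfl

theorem Gseq_add (hq : q ≠ 0) (G : Matrix (Fin μ) (Fin μ) (RatFunc Kv)) (n m : ℕ) :
    Gseq q G (n + m) = (twistedQDeriv hq G ^ n) (Gseq q G m) := by
  simp only [Gseq_eq_twistedQDeriv_pow hq, pow_add, Module.End.mul_apply]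

variable [IsUltrametricDist Kv]

theorem matGaussNorm_matQShift_pow (hq0 : q ≠ 0) (hq : ‖q‖ = 1) (n : ℕ)
    (Y : Matrix (Fin μ) (Fin μ) (RatFunc Kv)) :
    matGaussNorm ((matQShift μ hq0 ^ n) Y) = matGaussNorm Y := by
  have entry (i j : Fin μ) : gaussNorm ((matQShift μ hq0 ^ n) Y i j) = gaussNorm (Y i j) := by
    rw [matQShift, mapMatrix_pow_apply]
    exact map_pow_apply_of_map_apply (v := gaussAbsoluteValue Kv) (gaussNorm_qShift hq0 hq) n _
  simp only [matGaussNorm, entry]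

theorem matGaussNorm_qDividedPower_matQDeriv_le (hq0 : q ≠ 0) (hq : ‖q‖ = 1)
    (hqru : ∀ m : ℕ, 0 < m → q ^ m ≠ 1) (n : ℕ) (Y : Matrix (Fin μ) (Fin μ) (RatFunc Kv)) :
    matGaussNorm (qDividedPower q (matQDeriv μ hq0) n Y) ≤ matGaussNorm Y := by
  refine matGaussNorm_le (matGaussNorm_nonneg Y) fun i j => ?_
  rw [qDividedPower, LinearMap.smul_apply, Matrix.smul_apply, matQDeriv, mapMatrix_pow_apply]
  exact (gaussNorm_qDividedPower_qDeriv_le hq hqru hq0 (Y i j) n).trans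
    (gaussNorm_le_matGaussNorm Y i j)

theorem matGaussNorm_qDividedPower_twistedQDeriv (hq0 : q ≠ 0)
    (G : Matrix (Fin μ) (Fin μ) (RatFunc Kv)) (n m : ℕ) :
    matGaussNorm (qDividedPower q (twistedQDeriv hq0 G) n (Gseq q G m)) =
      matGaussNorm (Gseq q G (n + m)) / ‖qFactorial q n‖ := by
  rw [qDividedPower, LinearMap.smul_apply, ← Gseq_add, matGaussNorm_smul, norm_inv,
    div_eq_inv_mul]

theorem matGaussNorm_Gseq_add_le (hq : ‖q‖ = 1) (hqru : ∀ m : ℕ, 0 < m → q ^ m ≠ 1)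
    (G : Matrix (Fin μ) (Fin μ) (RatFunc Kv)) {n : ℕ} {B : ℝ}
    (hB : ∀ i ≤ n, matGaussNorm (Gseq q G i) / ‖qFactorial q i‖ ≤ B) (m : ℕ) :
    matGaussNorm (Gseq q G (n + m)) ≤ ‖qFactorial q n‖ * B * matGaussNorm (Gseq q G m) := by
  have hq0 : q ≠ 0 := norm_ne_zero_iff.1 (hq ▸ one_ne_zero)
  have hB0 : 0 ≤ B := (div_nonneg (matGaussNorm_nonneg _) (norm_nonneg _)).trans (hB 0 n.zero_le)
  rw [mul_assoc, ← div_le_iff₀' (norm_pos_iff.2 (qFactorial_ne_zero hqru n)),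
    ← matGaussNorm_qDividedPower_twistedQDeriv hq0, ← one_mul (Gseq q G m),
    qDividedPower_mul hqru (matQDeriv_mul_matQShift hq0) (twistedQDeriv_mul hq0 G)]
  refine matGaussNorm_sum_le (mul_nonneg hB0 (matGaussNorm_nonneg _)) fun ij hij => ?_
  have hle : ij.1 ≤ n := by
    have := Finset.HasAntidiagonal.mem_antidiagonal.1 hij
    omega
  refine (matGaussNorm_mul_le _ _).trans (mul_le_mul ?_ ?_ (matGaussNorm_nonneg _) hB0)
  · exact (matGaussNorm_qDividedPower_twistedQDeriv hq0 G ij.1 0).trans_le (hB _ hle)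
  · rw [matGaussNorm_matQShift_pow hq0 hq, one_mul]
    exact matGaussNorm_qDividedPower_matQDeriv_le hq0 hq hqru _ _

end Matrices

section RunningMax

/-- The running maximum `max_{0 ≤ s ≤ n} log (a s)`. -/
def maxLog (a : ℕ → ℝ) (n : ℕ) : ℝ := ⨆ s : Fin (n + 1), Real.log (a s)

variable {a : ℕ → ℝ} {n s : ℕ}

theorem log_le_maxLog (a : ℕ → ℝ) (hs : s ≤ n) : Real.log (a s) ≤ maxLog a n :=
  le_ciSup (f := fun s : Fin (n + 1) => Real.log (a s)) (Set.finite_range _).bddAbove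
    ⟨s, Nat.lt_succ_of_le hs⟩

theorem maxLog_le {B : ℝ} (h : ∀ s ≤ n, Real.log (a s) ≤ B) : maxLog a n ≤ B :=
  ciSup_le fun s => h s s.is_le

theorem maxLog_nonneg (ha0 : Real.log (a 0) = 0) (n : ℕ) : 0 ≤ maxLog a n :=
  ha0.symm.trans_le (log_le_maxLog a n.zero_le)

theorem le_exp_maxLog (ha : ∀ n, 0 ≤ a n) (hs : s ≤ n) : a s ≤ Real.exp (maxLog a n) := by
  rcases (ha s).eq_or_lt with h0 | hpos
  · exact h0 ▸ (Real.exp_pos _).le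
  · exact (Real.log_le_iff_le_exp hpos).1 (log_le_maxLog a hs)

theorem log_le_of_le_exp {x y : ℝ} (hx : 0 ≤ x) (hy : 0 ≤ y) (h : x ≤ Real.exp y) :
    Real.log x ≤ y := by
  rcases hx.eq_or_lt with rfl | hpos
  · rwa [Real.log_zero]
  · exact (Real.log_le_iff_le_exp hpos).2 h

theorem eventually_maxLog_div_lt (ha : ∀ n, 0 ≤ a n) {M y : ℝ} (hM : 0 ≤ M) (hMy : M < y)
    (h : ∀ᶠ N : ℕ in atTop, a N ≤ Real.exp (M * N)) : ∀ᶠ n : ℕ in atTop, maxLog a n / n < y := by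
  obtain ⟨N₀, hN₀⟩ := eventually_atTop.1 h
  have maxLog_le_linear (n : ℕ) : maxLog a n ≤ |maxLog a N₀| + M * n := by
    refine maxLog_le fun s hs => ?_
    have hMn : 0 ≤ M * n := by positivity
    rcases le_or_gt s N₀ with hsN | hsN
    · linarith [log_le_maxLog a hsN, le_abs_self (maxLog a N₀)]
    · calc Real.log (a s) ≤ M * s := log_le_of_le_exp (ha s) (by positivity) (hN₀ s hsN.le)
        _ ≤ M * n := by gcongr
        _ ≤ |maxLog a N₀| + M * n := le_add_of_nonneg_left (abs_nonneg _)
  have hconst : Tendsto (fun n : ℕ => |maxLog a N₀| / (n : ℝ)) atTop (nhds 0) :=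
    tendsto_const_div_atTop_nhds_zero_nat _
  filter_upwards [hconst.eventually_lt_const (sub_pos.2 hMy), eventually_gt_atTop 0] with n hn hn0
  have hn0' : (n : ℝ) ≠ 0 := Nat.cast_ne_zero.2 hn0.ne'
  calc maxLog a n / n ≤ (|maxLog a N₀| + M * n) / n := by
        gcongr
        exact maxLog_le_linear n
    _ = |maxLog a N₀| / n + M := by rw [add_div, mul_div_cancel_right₀ _ hn0']
    _ < y := by linarith

end RunningMax

section CappedRadius

/-- The capped radius of convergence `min(1, liminf (a n)^{-1/n})` of `∑ a n X^n`. -/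
def cappedRadius (a : ℕ → ℝ) : ℝ≥0∞ :=
  min 1 (liminf (fun n : ℕ => ENNReal.ofReal (a n) ^ (-(1 / (n : ℝ)))) atTop)

variable {a : ℕ → ℝ}

theorem ofReal_exp_neg_le_rpow_iff {x M : ℝ} {n : ℕ} (hn : 0 < n) :
    ENNReal.ofReal (Real.exp (-M)) ≤ ENNReal.ofReal x ^ (-(1 / (n : ℝ))) ↔
      x ≤ Real.exp (M * n) := by
  rw [ENNReal.rpow_neg, Real.exp_neg, ENNReal.ofReal_inv_of_pos (Real.exp_pos M),
    ENNReal.inv_le_inv, one_div, ENNReal.rpow_inv_le_iff (Nat.cast_pos.2 hn),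
    ENNReal.ofReal_rpow_of_pos (Real.exp_pos M), ← Real.exp_mul,
    ENNReal.ofReal_le_ofReal_iff (Real.exp_pos _).le]

theorem cappedRadius_le_one (a : ℕ → ℝ) : cappedRadius a ≤ 1 := min_le_left _ _

theorem cappedRadius_ne_top (a : ℕ → ℝ) : cappedRadius a ≠ ⊤ :=
  ne_top_of_le_ne_top ENNReal.one_ne_top (cappedRadius_le_one a)

theorem log_one_div_cappedRadius_nonneg (a : ℕ → ℝ) :
    0 ≤ Real.log (1 / (cappedRadius a).toReal) := by
  rw [one_div, Real.log_inv, neg_nonneg]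
  exact Real.log_nonpos ENNReal.toReal_nonneg
    (ENNReal.toReal_mono ENNReal.one_ne_top (cappedRadius_le_one a))

theorem exp_neg_le_cappedRadius {M : ℝ} (hM : 0 ≤ M)
    (h : ∀ᶠ N : ℕ in atTop, a N ≤ Real.exp (M * N)) :
    Real.exp (-M) ≤ (cappedRadius a).toReal := by
  rw [← ENNReal.ofReal_le_iff_le_toReal (cappedRadius_ne_top a)]
  refine le_min ?_ (le_liminf_of_le (by isBoundedDefault) ?_)
  · simpa using hM
  · filter_upwards [h, eventually_gt_atTop 0] with N hN hN0
    exact (ofReal_exp_neg_le_rpow_iff hN0).2 hN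

theorem exp_neg_le_cappedRadius_of_le_const_mul {M C : ℝ} (hM : 0 ≤ M)
    (h : ∀ N : ℕ, a N ≤ C * Real.exp (M * N)) : Real.exp (-M) ≤ (cappedRadius a).toReal := by
  have of_gt (M' : ℝ) (hM' : M < M') : Real.exp (-M') ≤ (cappedRadius a).toReal := by
    refine exp_neg_le_cappedRadius (hM.trans hM'.le) ?_
    have hgap : Tendsto (fun N : ℕ => Real.exp ((M' - M) * N)) atTop atTop :=
      Real.tendsto_exp_atTop.comp
        (tendsto_natCast_atTop_atTop.const_mul_atTop (sub_pos.2 hM'))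
    filter_upwards [hgap.eventually_ge_atTop C] with N hN
    calc a N ≤ C * Real.exp (M * N) := h N
      _ ≤ Real.exp ((M' - M) * N) * Real.exp (M * N) := by gcongr
      _ = Real.exp (M' * N) := by rw [← Real.exp_add, ← add_mul, sub_add_cancel]
  have hcont : Tendsto (fun M' : ℝ => Real.exp (-M')) (nhdsWithin M (Set.Ioi M))
      (nhds (Real.exp (-M))) :=
    (by fun_prop : Continuous fun M' : ℝ => Real.exp (-M')).continuousWithinAt
  exact le_of_tendsto hcont (eventually_nhdsWithin_of_forall of_gt)

theorem eventually_le_exp_of_log_lt {M : ℝ} (hpos : 0 < (cappedRadius a).toReal)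
    (hM : Real.log (1 / (cappedRadius a).toReal) < M) :
    ∀ᶠ N : ℕ in atTop, a N ≤ Real.exp (M * N) := by
  have hlt : ENNReal.ofReal (Real.exp (-M)) < cappedRadius a := by
    rw [ENNReal.ofReal_lt_iff_lt_toReal (Real.exp_pos _).le (cappedRadius_ne_top a),
      ← Real.lt_log_iff_exp_lt hpos]
    rw [one_div, Real.log_inv] at hM
    exact neg_lt.1 hM
  have hliminf := eventually_lt_of_lt_liminf (hlt.trans_le (min_le_right _ _))
    (by isBoundedDefault)
  filter_upwards [hliminf, eventually_gt_atTop 0] with N hN hN0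
  exact (ofReal_exp_neg_le_rpow_iff hN0).1 hN.le

end CappedRadius

section GrowthRate

theorem exists_le_const_mul_exp_of_add_le {b : ℕ → ℝ} {t : ℝ} {m : ℕ} (hm : 0 < m)
    (hb : ∀ k, b (m + k) ≤ Real.exp (t * m) * b k) : ∃ C, ∀ N : ℕ, b N ≤ C * Real.exp (t * N) := by
  obtain ⟨C, hC⟩ := ((Set.finite_lt_nat m).image fun r : ℕ => b r / Real.exp (t * r)).bddAbove
  refine ⟨C, fun N => ?_⟩
  induction N using Nat.strong_induction_on with
  | _ N ih =>
    rcases lt_or_ge N m with hN | hN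
    · exact (div_le_iff₀ (Real.exp_pos _)).1 (hC (Set.mem_image_of_mem _ hN))
    · obtain ⟨k, rfl⟩ := Nat.exists_eq_add_of_le hN
      calc b (m + k) ≤ Real.exp (t * m) * b k := hb k
        _ ≤ Real.exp (t * m) * (C * Real.exp (t * k)) := by
          gcongr
          exact ih k (by omega)
        _ = C * Real.exp (t * (m + k : ℕ)) := by
          rw [mul_left_comm, ← Real.exp_add, Nat.cast_add, mul_add]

-- Fekete's lemma, for the submultiplicative sequence `F`.
theorem exists_tendsto_log_div_of_submultiplicative {F : ℕ → ℝ} (hF0 : F 0 = 1)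
    (hF : ∀ m n, F (m + n) ≤ F m * F n) {c : ℝ} (hc : 0 < c) (hcF : ∀ n, c ^ n ≤ F n) :
    ∃ l, Tendsto (fun n : ℕ => Real.log (F n) / n) atTop (nhds l) ∧
      ∀ n : ℕ, Real.exp (l * n) ≤ F n := by
  have hFpos (n : ℕ) : 0 < F n := (pow_pos hc n).trans_le (hcF n)
  have hsub : Subadditive fun n => Real.log (F n) := fun m n => by
    rw [← Real.log_mul (hFpos m).ne' (hFpos n).ne']
    exact Real.log_le_log (hFpos _) (hF m n)
  have hbdd : BddBelow (Set.range fun n : ℕ => Real.log (F n) / n) := by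
    refine ⟨min 0 (Real.log c), ?_⟩
    rintro _ ⟨n, rfl⟩
    rcases n.eq_zero_or_pos with rfl | hn
    · simp
    · refine (min_le_right _ _).trans ((le_div_iff₀' (Nat.cast_pos.2 hn)).2 ?_)
      rw [← Real.log_pow]
      exact Real.log_le_log (pow_pos hc n) (hcF n)
  refine ⟨hsub.lim, hsub.tendsto_lim hbdd, fun n => ?_⟩
  rcases n.eq_zero_or_pos with rfl | hn
  · simp [hF0]
  · rw [← Real.le_log_iff_exp_le (hFpos n)]
    exact (le_div_iff₀ (Nat.cast_pos.2 hn)).1 (hsub.lim_le_div hbdd hn.ne')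

variable {b F : ℕ → ℝ}

theorem exp_neg_le_cappedRadius_div_of_add_le (hb : ∀ n, 0 ≤ b n)
    (hb0 : Real.log (b 0 / F 0) = 0) {l : ℝ} (hl : ∀ n : ℕ, Real.exp (l * n) ≤ F n)
    (hadd : ∀ n m B, (∀ i ≤ n, b i / F i ≤ B) → b (n + m) ≤ F n * B * b m) {m : ℕ} (hm : 0 < m) :
    Real.exp (-(maxLog (fun n => b n / F n) m / m + (Real.log (F m) / m - l))) ≤
      (cappedRadius fun n => b n / F n).toReal := by
  have hF (n : ℕ) : 0 < F n := (Real.exp_pos _).trans_le (hl n)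
  have ha (n : ℕ) : 0 ≤ b n / F n := div_nonneg (hb n) (hF n).le
  have hm0 : (0 : ℝ) < m := Nat.cast_pos.2 hm
  set M := maxLog (fun n => b n / F n) m / m + (Real.log (F m) / m - l) with hM_def
  have hM : 0 ≤ M := by
    have hlog : l * m ≤ Real.log (F m) := (Real.le_log_iff_exp_le (hF m)).2 (hl m)
    exact add_nonneg (div_nonneg (maxLog_nonneg hb0 m) hm0.le)
      (sub_nonneg.2 ((le_div_iff₀ hm0).2 hlog))
  have step_eq : F m * Real.exp (maxLog (fun n => b n / F n) m) = Real.exp ((M + l) * m) := by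
    have : (M + l) * m = Real.log (F m) + maxLog (fun n => b n / F n) m := by
      rw [hM_def]
      field_simp
      ring
    rw [this, Real.exp_add, Real.exp_log (hF m)]
  obtain ⟨C, hC⟩ := exists_le_const_mul_exp_of_add_le hm fun k =>
    step_eq ▸ hadd m k _ fun i hi => le_exp_maxLog ha hi
  have hC0 : 0 ≤ C := nonneg_of_mul_nonneg_left ((hb 0).trans (hC 0)) (Real.exp_pos _)
  refine exp_neg_le_cappedRadius_of_le_const_mul (C := C) hM fun N => ?_
  calc b N / F N ≤ C * Real.exp ((M + l) * N) / Real.exp (l * N) :=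
        div_le_div₀ (mul_nonneg hC0 (Real.exp_pos _).le) (hC N) (Real.exp_pos _) (hl N)
    _ = C * Real.exp (M * N) := by
        rw [add_mul, Real.exp_add, ← mul_assoc, mul_div_cancel_right₀ _ (Real.exp_ne_zero _)]

theorem tendsto_maxLog_div (hb : ∀ n, 0 ≤ b n) (hb0 : Real.log (b 0) = 0) (hF0 : F 0 = 1)
    (hF : ∀ m n, F (m + n) ≤ F m * F n) {c : ℝ} (hc : 0 < c) (hcF : ∀ n, c ^ n ≤ F n)
    (hadd : ∀ n m B, (∀ i ≤ n, b i / F i ≤ B) → b (n + m) ≤ F n * B * b m) :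
    Tendsto (fun n : ℕ => maxLog (fun n => b n / F n) n / n) atTop
      (nhds (Real.log (1 / (cappedRadius fun n => b n / F n).toReal))) := by
  obtain ⟨l, hlim, hl⟩ := exists_tendsto_log_div_of_submultiplicative hF0 hF hc hcF
  have ha (n : ℕ) : 0 ≤ b n / F n := div_nonneg (hb n) ((pow_pos hc n).le.trans (hcF n))
  rw [← div_one (b 0), ← hF0] at hb0
  have lower {m : ℕ} (hm : 0 < m) := exp_neg_le_cappedRadius_div_of_add_le hb hb0 hl hadd hm
  have hpos : 0 < (cappedRadius fun n => b n / F n).toReal :=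
    (Real.exp_pos _).trans_le (lower one_pos)
  refine tendsto_order.2 ⟨fun y hy => ?_, fun y hy => ?_⟩
  · filter_upwards [hlim.eventually_lt_const (lt_add_of_pos_right l (sub_pos.2 hy)),
      eventually_gt_atTop 0] with m hFm hm
    have hlog := (Real.le_log_iff_exp_le hpos).2 (lower hm)
    rw [one_div, Real.log_inv] at hFm
    linarith
  · obtain ⟨M, hLM, hMy⟩ := exists_between hy
    exact eventually_maxLog_div_lt ha ((log_one_div_cappedRadius_nonneg _).trans hLM.le) hMy
      (eventually_le_exp_of_log_lt hpos hLM)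

end GrowthRate

theorem ne_zero_of_lt_rpow {x y s : ℝ} (hx : 0 ≤ x) (hs : s ≠ 0) (h : x < y ^ s) : y ≠ 0 := by
  rintro rfl
  exact (hx.trans_lt h).ne' (Real.zero_rpow hs)

theorem q_chi_as_limit_general [IsUltrametricDist Kv] [CharZero Kv] {q : Kv} (hq : ‖q‖ = 1)
    (hqru : ∀ m : ℕ, 0 < m → q ^ m ≠ 1) {μ : ℕ} (G : Matrix (Fin μ) (Fin μ) (RatFunc Kv)) :
    Tendsto (fun n : ℕ => (⨆ s : Fin (n + 1),
      Real.log (matGaussNorm (Gseq q G (s : ℕ)) / ‖qFactorial q (s : ℕ)‖)) / (n : ℝ)) atTop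
      (nhds (Real.log (1 / (chiV q G).toReal))) := by
  obtain ⟨c, hc, hcF⟩ := exists_pow_le_norm_qFactorial hq.le hqru
  exact tendsto_maxLog_div (b := fun n => matGaussNorm (Gseq q G n))
    (F := fun n => ‖qFactorial q n‖) (fun n => matGaussNorm_nonneg _) log_matGaussNorm_one
    (by simp) (norm_qFactorial_add_le hq.le) hc hcF
    (fun _ m _ hB => matGaussNorm_Gseq_add_le hq hqru G hB m)

/-- The sequence h(n)/n converges to log(1/χ_v). -/
theorem q_chi_as_limit
    {Kv : Type*} [NontriviallyNormedField Kv] [CompleteSpace Kv]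
    (hna : ∀ x y : Kv, ‖x + y‖ ≤ max ‖x‖ ‖y‖)
    (p : ℕ) (hp : Nat.Prime p) (hpv : ‖(p : Kv)‖ < 1)
    (q : Kv) (hq1 : ‖q‖ = 1) (hqru : ∀ m : ℕ, 0 < m → q ^ m ≠ 1)
    (κ : ℕ) (hκpos : 0 < κ) (hκlt : ‖1 - q ^ κ‖ < 1)
    (hκmin : ∀ m : ℕ, 0 < m → ‖1 - q ^ m‖ < 1 → κ ≤ m)
    (hdw : ‖1 - q ^ κ‖ < ‖(p : Kv)‖ ^ ((1 : ℝ) / ((p : ℝ) - 1)))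
    (μ : ℕ) (G : Matrix (Fin μ) (Fin μ) (RatFunc Kv))
    (h : ℕ → ℝ)
    (hh : ∀ n : ℕ, h n = ⨆ s : Fin (n + 1),
      Real.log (matGaussNorm (Gseq q G (s : ℕ)) / ‖qFactorial q (s : ℕ)‖)) :
    Filter.Tendsto (fun n : ℕ => h n / (n : ℝ)) Filter.atTop
      (nhds (Real.log (1 / (chiV q G).toReal))) := by
  have hexp : (1 : ℝ) / ((p : ℝ) - 1) ≠ 0 :=
    one_div_ne_zero (sub_ne_zero.2 (Nat.cast_ne_one.2 hp.ne_one))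
  have hp0 : (p : Kv) ≠ 0 := norm_ne_zero_iff.1 (ne_zero_of_lt_rpow (norm_nonneg _) hexp hdw)
  have : IsUltrametricDist Kv :=
    IsUltrametricDist.isUltrametricDist_of_forall_norm_add_le_max_norm hna
  have : CharZero Kv := charZero_of_norm_natCast_lt_one hp hpv hp0
  simpa only [hh] using q_chi_as_limit_general hq1 hqru G
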